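/- Let r > 0 and let x₁, y₁, x₂, y₂ : ℝ → ℝ be differentiable functions satisfying, for all t ∈ ℝ, x₁'(t) = −r·x₁(t)·y₁(t), y₁'(t) = x₁(t) − x₂(t), x₂'(t) = −r·x₂(t)·y₂(t), y₂'(t) = x₂(t) − x₁(t), with initial conditions y₁(0) = y₂(0) = 0, x₁(0) = a, x₂(0) = b. Then for all t ∈ ℝ, y₁(t) + y₂(t) = 0 and x₁(t)·x₂(t) = a·b. -/

import Mathlib

/-!
Both quantities are first integrals. The right-hand sides for `y₁` and `y₂` cancel, so `y₁ + y₂`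
keeps its initial value `0`; and `(x₁ x₂)' = -r x₁ x₂ (y₁ + y₂)`, so `x₁ x₂` is then constant too.
-/

/-- Invariants of the four-dimensional ODE system: `y₁ + y₂ = 0` and
`x₁ x₂ = a b` along solutions. -/
theorem fourdim_invariants (r a b : ℝ) (hr : r > 0)
    (x₁ y₁ x₂ y₂ : ℝ → ℝ)
    (hx₁ : ∀ t : ℝ, HasDerivAt x₁ (-r * x₁ t * y₁ t) t)
    (hy₁ : ∀ t : ℝ, HasDerivAt y₁ (x₁ t - x₂ t) t)
    (hx₂ : ∀ t : ℝ, HasDerivAt x₂ (-r * x₂ t * y₂ t) t)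
    (hy₂ : ∀ t : ℝ, HasDerivAt y₂ (x₂ t - x₁ t) t)
    (hy₁0 : y₁ 0 = 0) (hy₂0 : y₂ 0 = 0)
    (hx₁0 : x₁ 0 = a) (hx₂0 : x₂ 0 = b) :
    ∀ t : ℝ, y₁ t + y₂ t = 0 ∧ x₁ t * x₂ t = a * b := by
  have hconst : ∀ f : ℝ → ℝ, (∀ t, HasDerivAt f 0 t) → ∀ t, f t = f 0 := fun f hf t =>
    is_const_of_deriv_eq_zero (fun s => (hf s).differentiableAt) (fun s => (hf s).deriv) t 0
  have hsum : ∀ t, y₁ t + y₂ t = 0 := by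
    intro t
    have h := hconst (fun s => y₁ s + y₂ s)
      (fun s => ((hy₁ s).fun_add (hy₂ s)).congr_deriv (by ring)) t
    simpa [hy₁0, hy₂0] using h
  intro t
  refine ⟨hsum t, ?_⟩
  -- The derivative of `x₁ x₂` is `-r x₁ x₂ (y₁ + y₂)`, which vanishes by `hsum`.
  have h := hconst (fun s => x₁ s * x₂ s)
    (fun s => ((hx₁ s).fun_mul (hx₂ s)).congr_deriv
      (by linear_combination (-r * x₁ s * x₂ s) * hsum s)) t
  simpa [hx₁0, hx₂0] using h
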